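/- arXiv:1603.00103 — 5 statements merged into one kernel-verified Lean document; each statement's English description precedes it below -/
import Mathlib

section
/- Let I = [i_1, …, i_d] be a word with letters in {1, …, r}. The letters of I are pairwise distinct (i.e. the map m ↦ i_m is injective) if and only if for every ε ∈ {0,1}^d the weights w_1(ε), …, w_d(ε) are pairwise non-collinear, i.e. for all ℓ ≠ m the vectors w_ℓ(ε) and w_m(ε) are not collinear. (This is the criterion for the Bott–Samelson space BS^I to be of GKM type.) -/
open scoped RealInnerProductSpace

variable {V : Type*} [NormedAddCommGroup V] [InnerProductSpace ℝ V]

/-- The reflection determined by a (nonzero) vector `β`. -/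
noncomputable def reflVec (β v : V) : V := v - ((2 * ⟪v, β⟫) / ⟪β, β⟫) • β

/-- `s_β^b`: the reflection if `b = true`, the identity otherwise. -/
noncomputable def reflPow (b : Bool) (β v : V) : V := if b then reflVec β v else v

/-- The weight at position `m` of the fixed point `ε` of the Bott–Samelson space of the
word `i : Fin d → Fin r`:  `w_m(ε) = s_{i_d}^{ε_d} ∘ ⋯ ∘ s_{i_m}^{ε_m} (α_{i_m})`. -/
noncomputable def bsWeight {r d : ℕ} (α : Fin r → V) (i : Fin d → Fin r)
    (ε : Fin d → Bool) (m : Fin d) : V :=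
  ((List.finRange d).filter (fun k => decide (m ≤ k))).foldl
    (fun v k => reflPow (ε k) (α (i k)) v) (α (i m))

/-- Two vectors are collinear if one is a real scalar multiple of the other. -/
def CollinearPair (u v : V) : Prop := (∃ c : ℝ, u = c • v) ∨ (∃ c : ℝ, v = c • u)

/-!
A reflection moves a vector only along its root. In `w_m(ε)` the first reflection sends `α_{i_m}` to
`±α_{i_m}`, and each later one adds a multiple of some `α_{i_k}` with `k > m`. So for every `ε` the
weights are related to the `α_{i_m}` by a triangular matrix with diagonal entries `±1`. If the
letters are distinct, the `α_{i_m}` are linearly independent, hence so are the weights. If a letter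
is repeated, the corresponding weights at `ε = 0` coincide.
-/

open Submodule

theorem linearIndependent_of_forall_mem_span_insert {K M ι : Type*} [DivisionRing K]
    [AddCommGroup M] [Module K M] [Finite ι] [Preorder ι] {v w : ι → M}
    (hv : LinearIndependent K v) (h : ∀ m, v m ∈ span K (insert (w m) (v '' Set.Ioi m))) :
    LinearIndependent K w := by
  have := Fintype.ofFinite ι
  have hmem (m : ι) : v m ∈ span K (Set.range w) := by
    induction m using WellFoundedGT.induction with
    | ind m ih =>
      refine span_le.mpr (Set.insert_subset (subset_span (Set.mem_range_self m)) ?_) (h m)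
      rintro _ ⟨k, hk, rfl⟩
      exact ih k hk
  have hspan : span K (Set.range v) ≤ span K (Set.range w) :=
    span_le.mpr (Set.range_subset_iff.mpr hmem)
  rw [linearIndependent_iff_card_le_finrank_span, Set.finrank, ← finrank_span_eq_card hv]
  have := FiniteDimensional.span_of_finite K (Set.finite_range w)
  exact finrank_mono hspan

theorem CollinearPair.refl (u : V) : CollinearPair u u :=
  Or.inl ⟨1, (one_smul ℝ u).symm⟩

theorem not_collinearPair_of_linearIndependent {ι : Type*} {w : ι → V}
    (hw : LinearIndependent ℝ w) {l m : ι} (hne : l ≠ m) : ¬ CollinearPair (w l) (w m) := by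
  have hnotMem {j k : ι} (hjk : j ≠ k) : w j ∉ span ℝ {w k} := by
    simpa only [Set.image_singleton] using hw.notMem_span_image (s := {k}) hjk
  rintro (⟨c, hc⟩ | ⟨c, hc⟩)
  · exact hnotMem hne (mem_span_singleton.mpr ⟨c, hc.symm⟩)
  · exact hnotMem hne.symm (mem_span_singleton.mpr ⟨c, hc.symm⟩)

theorem reflVec_self (β : V) : reflVec β β = -β := by
  rcases eq_or_ne β 0 with rfl | hβ
  · simp [reflVec]
  · have hinner : ⟪β, β⟫ ≠ 0 := inner_self_ne_zero.mpr hβ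
    rw [reflVec, mul_div_cancel_right₀ _ hinner, two_smul, sub_add_cancel_left]

theorem reflPow_self_eq_or_eq_neg (b : Bool) (β : V) :
    reflPow b β β = β ∨ reflPow b β β = -β := by
  cases b
  · exact Or.inl rfl
  · exact Or.inr (reflVec_self β)

theorem reflPow_sub_self_mem_span_singleton (b : Bool) (β v : V) :
    reflPow b β v - v ∈ span ℝ {β} := by
  cases b
  · simp [reflPow]
  · simpa [reflPow, reflVec] using smul_mem _ _ (mem_span_singleton_self β)

theorem foldl_reflPow_sub_self_mem_span {κ : Type*} (b : κ → Bool) (β : κ → V) (l : List κ)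
    (v : V) :
    l.foldl (fun u k => reflPow (b k) (β k) u) v - v ∈ span ℝ (β '' {k | k ∈ l}) := by
  induction l generalizing v with
  | nil => simp
  | cons a l ih =>
    have ha : a ∈ {k | k ∈ a :: l} := List.mem_cons_self
    have hhead := span_mono (Set.singleton_subset_iff.mpr (Set.mem_image_of_mem β ha))
      (reflPow_sub_self_mem_span_singleton (b a) (β a) v)
    have hl : {k | k ∈ l} ⊆ {k | k ∈ a :: l} := fun _ => List.mem_cons_of_mem a
    have htail := span_mono (Set.image_mono hl) (ih (reflPow (b a) (β a) v))
    simpa only [List.foldl_cons, sub_add_sub_cancel] using add_mem htail hhead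

theorem filter_le_eq_cons_filter_lt {κ : Type*} [PartialOrder κ] [DecidableLE κ] [DecidableLT κ]
    {l : List κ} (hl : l.SortedLT) {m : κ} (hm : m ∈ l) :
    l.filter (fun k => decide (m ≤ k)) = m :: l.filter (fun k => decide (m < k)) := by
  refine List.Pairwise.eq_of_mem_iff (hl.pairwise.filter _)
    (List.pairwise_cons.mpr ⟨fun k hk => ?_, hl.pairwise.filter _⟩) fun k => ?_
  · exact of_decide_eq_true (List.mem_filter.mp hk).2
  · have hhead : k ∈ l ∧ m = k ↔ k = m := ⟨fun h => h.2.symm, fun h => ⟨h ▸ hm, h.symm⟩⟩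
    simp only [List.mem_filter, List.mem_cons, decide_eq_true_eq, le_iff_eq_or_lt, and_or_left,
      hhead]

section Weights

variable {r d : ℕ} {α : Fin r → V} {i : Fin d → Fin r}

theorem bsWeight_false (m : Fin d) : bsWeight α i (fun _ => false) m = α (i m) := by
  simp only [bsWeight, reflPow, Bool.false_eq_true, if_false, List.foldl_fixed]

theorem bsWeight_sub_reflPow_self_mem_span (ε : Fin d → Bool) (m : Fin d) :
    bsWeight α i ε m - reflPow (ε m) (α (i m)) (α (i m)) ∈ span ℝ (α ∘ i '' Set.Ioi m) := by
  rw [bsWeight, filter_le_eq_cons_filter_lt (List.sortedLT_finRange d) (List.mem_finRange m),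
    List.foldl_cons]
  simpa [Set.Ioi] using foldl_reflPow_sub_self_mem_span ε (α ∘ i)
    ((List.finRange d).filter fun k => decide (m < k)) (reflPow (ε m) (α (i m)) (α (i m)))

theorem apply_mem_span_insert_bsWeight (ε : Fin d → Bool) (m : Fin d) :
    α (i m) ∈ span ℝ (insert (bsWeight α i ε m) (α ∘ i '' Set.Ioi m)) := by
  have hrefl : reflPow (ε m) (α (i m)) (α (i m)) ∈
      span ℝ (insert (bsWeight α i ε m) (α ∘ i '' Set.Ioi m)) :=
    (sub_mem_iff_right _ (subset_span (Set.mem_insert _ _))).mp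
      (span_mono (Set.subset_insert _ _) (bsWeight_sub_reflPow_self_mem_span ε m))
  rcases reflPow_self_eq_or_eq_neg (ε m) (α (i m)) with hself | hself
  · rwa [hself] at hrefl
  · rwa [hself, neg_mem_iff] at hrefl

theorem linearIndependent_bsWeight (hli : LinearIndependent ℝ (α ∘ i)) (ε : Fin d → Bool) :
    LinearIndependent ℝ (bsWeight α i ε) :=
  linearIndependent_of_forall_mem_span_insert hli (apply_mem_span_insert_bsWeight ε)

end Weights

/-- The Bott–Samelson space `BS^I` is of GKM type (the weights at each fixed point are
pairwise non-collinear) if and only if the letters of the word `I` are pairwise distinct. -/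
theorem bs_gkm_iff_injective {r d : ℕ} (α : Fin r → V) (hα : ∀ k, α k ≠ 0)
    (hli : LinearIndependent ℝ α) (i : Fin d → Fin r) :
    Function.Injective i ↔
      ∀ ε : Fin d → Bool, ∀ ℓ m : Fin d, ℓ ≠ m →
        ¬ CollinearPair (bsWeight α i ε ℓ) (bsWeight α i ε m) := by
  constructor
  · intro hi ε ℓ m hne
    exact not_collinearPair_of_linearIndependent
      (linearIndependent_bsWeight (hli.comp i hi) ε) hne
  · intro h ℓ m hletter
    by_contra hne
    apply h (fun _ => false) ℓ m hne
    rw [bsWeight_false, bsWeight_false, hletter]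
    exact CollinearPair.refl _
end

section
/- Let I = [i_1, …, i_d] be a word with letters in {1, …, r}, let j ∈ {1, …, r}, and let I' = [i_1, …, i_d, j] be the word obtained by appending the letter j. If f ∈ A(Γ_{I'}) is an assignment for Γ_{I'}, then the map ε ↦ f(ε, 0) and the map ε ↦ s_j(f(ε, 1)) (for ε ∈ {0,1}^d) both belong to A(Γ_I). -/
open MvPolynomial

/-- The `ℝ`-algebra automorphism `s_j` of `S = ℝ[x_1, …, x_r]` determined by
`s_j(x_i) = x_i - c_{ji}·x_j`. -/
noncomputable def sRefl {r : ℕ} (c : Fin r → Fin r → ℝ) (j : Fin r) :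
    MvPolynomial (Fin r) ℝ →ₐ[ℝ] MvPolynomial (Fin r) ℝ :=
  aeval (fun i => X i - C (c j i) * X j)

/-- `s_j^b`: `s_j` if `b = true`, the identity otherwise. -/
noncomputable def sReflPow {r : ℕ} (c : Fin r → Fin r → ℝ) (b : Bool) (j : Fin r)
    (p : MvPolynomial (Fin r) ℝ) : MvPolynomial (Fin r) ℝ :=
  if b then sRefl c j p else p

/-- The weight-polynomial at position `m` of the vertex `ε` of the graph `Γ_I` for the
word `i : Fin d → Fin r`:  `w_m(ε) = s_{i_d}^{ε_d} ∘ ⋯ ∘ s_{i_m}^{ε_m}(α_{i_m})`, where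
`α_i = x_i`. -/
noncomputable def bsWeightP {r : ℕ} (c : Fin r → Fin r → ℝ) {d : ℕ} (i : Fin d → Fin r)
    (ε : Fin d → Bool) (m : Fin d) : MvPolynomial (Fin r) ℝ :=
  ((List.finRange d).filter (fun k => decide (m ≤ k))).foldl
    (fun p k => sReflPow c (ε k) (i k) p) (X (i m))

/-- An assignment for the graph `Γ_I`: a map `f : {0,1}^d → S` such that `w_m(ε)` divides
`f(ε) - f(ε')` for every pair of vertices `ε, ε'` differing in exactly the position `m`. -/
def IsAssignment {r : ℕ} (c : Fin r → Fin r → ℝ) {d : ℕ} (i : Fin d → Fin r)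
    (f : (Fin d → Bool) → MvPolynomial (Fin r) ℝ) : Prop :=
  ∀ ε ε' : Fin d → Bool, ∀ m : Fin d,
    ε m ≠ ε' m → (∀ k, k ≠ m → ε k = ε' k) → bsWeightP c i ε m ∣ f ε - f ε'

/-!
Appending `j` to the word composes every old weight with `s_j^b` on the fiber over the last
coordinate `b`. Thus for `b = 0` the divisibilities are unchanged, and for `b = 1` applying `s_j`
cancels the twist, since `s_j` is an involution as soon as `c_{jj} = 2`.
-/

section Reflection

variable {r : ℕ} {c : Fin r → Fin r → ℝ} {j : Fin r}

theorem sRefl_X (i : Fin r) : sRefl c j (X i) = X i - C (c j i) * X j :=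
  aeval_X _ i

theorem sRefl_X_self (hj : c j j = 2) : sRefl c j (X j) = -X j := by
  rw [sRefl_X, hj, map_ofNat]
  ring

theorem sRefl_involutive (hj : c j j = 2) : Function.Involutive (sRefl c j) := by
  have h : (sRefl c j).comp (sRefl c j) = AlgHom.id ℝ _ := by
    ext1 i
    calc sRefl c j (sRefl c j (X i))
        = sRefl c j (X i) - C (c j i) * sRefl c j (X j) := by
          rw [sRefl_X, map_sub, map_mul, algHom_C, algebraMap_eq, sRefl_X]
      _ = X i := by
          rw [sRefl_X, sRefl_X_self hj]
          ring
  exact DFunLike.congr_fun h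

end Reflection

theorem filter_castSucc_le_finRange_succ {d : ℕ} (m : Fin d) :
    (List.finRange (d + 1)).filter (fun k => decide (m.castSucc ≤ k)) =
      ((List.finRange d).filter (fun k => decide (m ≤ k))).map Fin.castSucc ++ [Fin.last d] := by
  simp [List.finRange_succ_last, List.filter_map, Function.comp_def, Fin.le_last]

section AppendedLetter

variable {r d : ℕ} {c : Fin r → Fin r → ℝ} {i : Fin d → Fin r} {j : Fin r}

theorem bsWeightP_snoc_castSucc (ε : Fin d → Bool) (b : Bool) (m : Fin d) :
    bsWeightP c (Fin.snoc i j : Fin (d + 1) → Fin r) (Fin.snoc ε b : Fin (d + 1) → Bool)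
        m.castSucc =
      sReflPow c b j (bsWeightP c i ε m) := by
  simp only [bsWeightP, filter_castSucc_le_finRange_succ, List.foldl_append, List.foldl_map,
    List.foldl_cons, List.foldl_nil, Fin.snoc_castSucc, Fin.snoc_last]

namespace IsAssignment

variable {f : (Fin (d + 1) → Bool) → MvPolynomial (Fin r) ℝ}

theorem sReflPow_dvd_snoc_sub_snoc (hf : IsAssignment c (Fin.snoc i j) f) (b : Bool)
    {ε ε' : Fin d → Bool} {m : Fin d} (hm : ε m ≠ ε' m) (hne : ∀ k, k ≠ m → ε k = ε' k) :
    sReflPow c b j (bsWeightP c i ε m) ∣ f (Fin.snoc ε b) - f (Fin.snoc ε' b) := by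
  rw [← bsWeightP_snoc_castSucc]
  refine hf _ _ m.castSucc ?_ ?_
  · simpa only [Fin.snoc_castSucc] using hm
  · simpa [Fin.forall_fin_succ'] using hne

theorem snoc_false (hf : IsAssignment c (Fin.snoc i j) f) :
    IsAssignment c i (fun ε => f (Fin.snoc ε false)) :=
  fun _ _ _ hm hne => hf.sReflPow_dvd_snoc_sub_snoc false hm hne

theorem sRefl_snoc_true (hf : IsAssignment c (Fin.snoc i j) f) (hj : c j j = 2) :
    IsAssignment c i (fun ε => sRefl c j (f (Fin.snoc ε true))) := by
  intro ε ε' m hm hne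
  have twisted : sRefl c j (bsWeightP c i ε m) ∣ f (Fin.snoc ε true) - f (Fin.snoc ε' true) :=
    hf.sReflPow_dvd_snoc_sub_snoc true hm hne
  simpa only [map_sub, sRefl_involutive hj _] using map_dvd (sRefl c j) twisted

end IsAssignment

end AppendedLetter

/-- If `f` is an assignment for `Γ_{[I,j]}`, then the restriction `ε ↦ f(ε, 0)` to the
fiber over `[0]` and the twisted restriction `ε ↦ s_j(f(ε, 1))` to the fiber over `[j]`
are both assignments for `Γ_I`. -/
theorem assignment_restrict_fibers {r : ℕ} (c : Fin r → Fin r → ℝ)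
    (hc : ∀ j, c j j = 2) {d : ℕ} (i : Fin d → Fin r) (j : Fin r)
    (f : (Fin (d + 1) → Bool) → MvPolynomial (Fin r) ℝ)
    (hf : IsAssignment c (Fin.snoc i j) f) :
    IsAssignment c i (fun ε => f (Fin.snoc ε false)) ∧
    IsAssignment c i (fun ε => sRefl c j (f (Fin.snoc ε true))) :=
  ⟨hf.snoc_false, hf.sRefl_snoc_true (hc j)⟩
end

section
/- The S-module A(Γ_{[2,1]}) is a free S-module with basis the following four assignments, where the values are listed at the vertices (00, 20, 01, 21) in this order: (1, 1, 1, 1), (0, x_2, 0, x_1 + x_2), (0, 0, x_1, x_1), and (0, 0, 0, x_1(x_1 + x_2)). That is, each of these four maps is an assignment, they are S-linearly independent, and every assignment for Γ_{[2,1]} is an S-linear combination of them. -/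
open MvPolynomial

/-- The polynomial ring `S = ℝ[x_1, x_2]`. -/
noncomputable abbrev S2 : Type := MvPolynomial (Fin 2) ℝ

/-- `x_1`. -/
noncomputable def x₁ : S2 := X 0
/-- `x_2`. -/
noncomputable def x₂ : S2 := X 1

/-- An assignment for the graph `Γ_{[2,1]}` in type `A_2`.  Vertices are pairs
`(b₁, b₂) : Bool × Bool`, where `00 = (false, false)`, `20 = (true, false)`,
`01 = (false, true)`, `21 = (true, true)`.  The edges and labels are:
`00–20` with label `x_2`, `01–21` with label `x_1 + x_2`, and `00–01`, `20–21`
each with label `x_1`. -/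
def IsAsgn21 (f : Bool × Bool → S2) : Prop :=
  (x₂ ∣ f (false, false) - f (true, false)) ∧
  ((x₁ + x₂) ∣ f (false, true) - f (true, true)) ∧
  (x₁ ∣ f (false, false) - f (false, true)) ∧
  (x₁ ∣ f (true, false) - f (true, true))

/-- The four claimed basis assignments, with values at `(00, 20, 01, 21)` given by
`(1,1,1,1)`, `(0, x₂, 0, x₁+x₂)`, `(0, 0, x₁, x₁)` and `(0, 0, 0, x₁(x₁+x₂))`. -/
noncomputable def B21 : Fin 4 → (Bool × Bool → S2) :=
  ![fun _ => 1,
    fun v => if v.1 then (if v.2 then x₁ + x₂ else x₂) else 0,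
    fun v => if v.2 then x₁ else 0,
    fun v => if v.1 then (if v.2 then x₁ * (x₁ + x₂) else 0) else 0]

/-!
The square `Γ_{[2,1]}` is two copies of an edge, with labels `x₂` and `x₁ + x₂`, glued along `x₁`,
and an edge is two copies of a point glued along its label. For submodules `M`, `N` of `L`, the
pairs in `M × N` that are congruent modulo `a` project to `M` with kernel `N ∩ aL`. If `N` is
saturated with respect to `a`, then `N ∩ aL = aN`. Hence a basis `u` of `M`, lifted to pairs
`(u i, u' i)`, together with the pairs `(0, a • w j)` for a basis `w` of `N`, is a basis of the
gluing. For the square, saturation says that `x₁ + x₂ ∣ x₁ * t` implies `x₁ + x₂ ∣ t`.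
-/

open Submodule

section Gluing

variable {R L ι κ : Type*} [CommRing R] [AddCommGroup L] [Module R L]

/-- The gluing of `M` and `N` along `a`: the pairs in `M × N` whose entries are congruent modulo
`a • L`. When `M` and `N` are the assignments of two labellings of one graph, these are the
assignments of the two labelled copies with corresponding vertices joined by edges labelled `a`. -/
def glue (a : R) (M N : Submodule R L) : Submodule R (L × L) :=
  M.prod N ⊓
    (LinearMap.range (LinearMap.lsmul R L a)).comap (LinearMap.fst R L L - LinearMap.snd R L L)

/-- The candidate basis of `glue a M N` built from bases `u` of `M` and `w` of `N`: the lifts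
`(u i, u' i)` of the `u i`, followed by the pairs `(0, a • w j)`. The choice of `u'` is free as long
as `u' i ∈ N` is congruent to `u i` modulo `a`. -/
def glueFamily (a : R) (u u' : ι → L) (w : κ → L) : ι ⊕ κ → L × L :=
  Sum.elim (fun i => (u i, u' i)) (fun j => (0, a • w j))

theorem mem_glue {a : R} {M N : Submodule R L} {p : L × L} :
    p ∈ glue a M N ↔ (p.1 ∈ M ∧ p.2 ∈ N) ∧ ∃ l, a • l = p.1 - p.2 :=
  Iff.rfl

theorem linearIndependent_glueFamily {a : R} {u : ι → L} {w : κ → L} (ha : IsSMulRegular L a)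
    (hu : LinearIndependent R u) (u' : ι → L) (hw : LinearIndependent R w) :
    LinearIndependent R (glueFamily a u u' w) := by
  have hlift : LinearIndependent R (LinearMap.fst R L L ∘ fun i => (u i, u' i)) := hu
  have hsmul : LinearIndependent R fun j => ((0, a • w j) : L × L) :=
    hw.map' (LinearMap.inr R L L ∘ₗ LinearMap.lsmul R L a)
      (LinearMap.ker_eq_bot.2 (LinearMap.inr_injective.comp ha))
  have hker : span R (Set.range fun j => ((0, a • w j) : L × L)) ≤
      LinearMap.ker (LinearMap.fst R L L) :=
    span_le.2 (Set.range_subset_iff.2 fun _ => rfl)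
  exact (LinearIndependent.of_comp _ hlift).sum_type hsmul
    ((range_ker_disjoint hlift).mono_right hker)

theorem span_glueFamily_le {a : R} {M N : Submodule R L} {u u' : ι → L} {w : κ → L}
    (hu : ∀ i, u i ∈ M) (hu' : ∀ i, u' i ∈ N) (huu' : ∀ i, ∃ l, a • l = u i - u' i)
    (hw : ∀ j, w j ∈ N) : span R (Set.range (glueFamily a u u' w)) ≤ glue a M N := by
  rw [span_le, Set.range_subset_iff]
  rintro (i | j)
  · exact ⟨⟨hu i, hu' i⟩, huu' i⟩
  · exact ⟨⟨M.zero_mem, N.smul_mem a (hw j)⟩, -w j, by simp [glueFamily]⟩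

theorem span_glueFamily {a : R} {M N : Submodule R L} {u u' : ι → L} {w : κ → L}
    (hsat : ∀ l, a • l ∈ N → l ∈ N) (hu : span R (Set.range u) = M) (hu' : ∀ i, u' i ∈ N)
    (huu' : ∀ i, ∃ l, a • l = u i - u' i) (hw : span R (Set.range w) = N) :
    span R (Set.range (glueFamily a u u' w)) = glue a M N := by
  set B := span R (Set.range (glueFamily a u u' w))
  have B_le : B ≤ glue a M N :=
    span_glueFamily_le (fun i => hu ▸ subset_span ⟨i, rfl⟩) hu' huu'
      (fun j => hw ▸ subset_span ⟨j, rfl⟩)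
  have le_map_fst : M ≤ B.map (LinearMap.fst R L L) := by
    rw [← hu, span_le, Set.range_subset_iff]
    exact fun i => ⟨(u i, u' i), subset_span ⟨Sum.inl i, rfl⟩, rfl⟩
  have le_comap : N ≤ B.comap (LinearMap.inr R L L ∘ₗ LinearMap.lsmul R L a) := by
    rw [← hw, span_le, Set.range_subset_iff]
    exact fun j => subset_span ⟨Sum.inr j, rfl⟩
  refine le_antisymm B_le fun p hp => ?_
  obtain ⟨q, hqB, hqp : q.1 = p.1⟩ := le_map_fst hp.1.1
  obtain ⟨⟨-, hN⟩, l, hl⟩ := mem_glue.1 (sub_mem hp (B_le hqB))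
  have hsub : p - q = (0, a • -l) := by
    ext <;> simp [hl, hqp]
  have hlN : -l ∈ N := hsat _ (by rwa [hsub] at hN)
  have hpq : p - q ∈ B := hsub ▸ le_comap hlN
  exact (B.sub_mem_iff_left hqB).1 hpq

end Gluing

section Square

variable {R : Type*} [CommRing R]

/-- The assignments of the graph with two vertices and one edge labelled `c`. -/
def edgeAsgn (c : R) : Submodule R (R × R) :=
  glue c ⊤ ⊤

/-- The basis `(1, 1), (0, c)` of `edgeAsgn c`. -/
def edgeBasis (c : R) : Fin 1 ⊕ Fin 1 → R × R :=
  glueFamily c 1 1 1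

theorem mem_edgeAsgn {c : R} {p : R × R} : p ∈ edgeAsgn c ↔ c ∣ p.1 - p.2 := by
  simp only [edgeAsgn, mem_glue, mem_top, true_and, and_self, smul_eq_mul, dvd_def, eq_comm]

theorem linearIndependent_edgeBasis {c : R} (hc : IsSMulRegular R c) :
    LinearIndependent R (edgeBasis c) := by
  have hone : LinearIndependent R (1 : Fin 1 → R) := by
    simp [Fintype.linearIndependent_iff]
  exact linearIndependent_glueFamily hc hone 1 hone

theorem span_edgeBasis (c : R) : span R (Set.range (edgeBasis c)) = edgeAsgn c := by
  have hone : span R (Set.range (1 : Fin 1 → R)) = ⊤ :=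
    Ideal.eq_top_of_isUnit_mem _ (subset_span ⟨0, rfl⟩) isUnit_one
  exact span_glueFamily (fun _ _ => mem_top) hone (fun _ => mem_top)
    (fun _ => ⟨0, by simp⟩) hone

theorem edgeBasis_congr {a b c : R} (h : a ∣ b - c) (i : Fin 1 ⊕ Fin 1) :
    ∃ l, a • l = edgeBasis b i - edgeBasis c i := by
  obtain ⟨d, hd⟩ := h
  rcases i with i | i
  · exact ⟨0, by simp [edgeBasis, glueFamily]⟩
  · exact ⟨(0, d), by simp [edgeBasis, glueFamily, hd]⟩

theorem mem_edgeAsgn_of_smul_mem {a c : R} (hsat : ∀ t, c ∣ a * t → c ∣ t) {p : R × R}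
    (hp : a • p ∈ edgeAsgn c) : p ∈ edgeAsgn c := by
  rw [mem_edgeAsgn] at hp ⊢
  exact hsat _ (by simpa [mul_sub] using hp)

/-- Assignments for the graph `Γ_{[2,1]}` with arbitrary labels: `b` on `00–20`, `c` on `01–21`, and
`a` on `00–01` and `20–21`. The vertices are encoded as in `IsAsgn21`. -/
def IsSquareAsgn (a b c : R) (f : Bool × Bool → R) : Prop :=
  (b ∣ f (false, false) - f (true, false)) ∧
  (c ∣ f (false, true) - f (true, true)) ∧
  (a ∣ f (false, false) - f (false, true)) ∧
  (a ∣ f (true, false) - f (true, true))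

/-- The analogue of `B21` for arbitrary labels: the values at `(00, 20, 01, 21)` are `(1, 1, 1, 1)`,
`(0, b, 0, c)`, `(0, 0, a, a)` and `(0, 0, 0, a * c)`. -/
def squareBasis (a b c : R) : Fin 4 → Bool × Bool → R :=
  ![fun _ => 1,
    fun v => if v.1 then (if v.2 then c else b) else 0,
    fun v => if v.2 then a else 0,
    fun v => if v.1 then (if v.2 then a * c else 0) else 0]

/-- The splitting of a function on the vertices of the square into its restrictions to the edges
`00–20` and `01–21`. -/
def layers (R : Type*) [CommRing R] : (Bool × Bool → R) →ₗ[R] (R × R) × (R × R) where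
  toFun f := ((f (false, false), f (true, false)), (f (false, true), f (true, true)))
  map_add' _ _ := rfl
  map_smul' _ _ := rfl

theorem layers_injective : Function.Injective (layers R) := by
  intro f g h
  simp only [layers, LinearMap.coe_mk, AddHom.coe_mk, Prod.mk.injEq] at h
  obtain ⟨⟨h00, h20⟩, h01, h21⟩ := h
  ext ⟨_ | _, _ | _⟩ <;> assumption

theorem isSquareAsgn_iff_layers_mem {a b c : R} {f : Bool × Bool → R} :
    IsSquareAsgn a b c f ↔ layers R f ∈ glue a (edgeAsgn b) (edgeAsgn c) := by
  simp [IsSquareAsgn, mem_glue, mem_edgeAsgn, layers, and_assoc, dvd_def, Prod.ext_iff, eq_comm]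

theorem layers_comp_squareBasis (a b c : R) :
    layers R ∘ squareBasis a b c ∘ (Equiv.sumCongr finSumFinEquiv finSumFinEquiv).trans
      finSumFinEquiv = glueFamily a (edgeBasis b) (edgeBasis c) (edgeBasis c) := by
  ext ((i | i) | (i | i)) <;> fin_cases i <;>
    simp [layers, squareBasis, glueFamily, edgeBasis, finSumFinEquiv]

theorem linearIndependent_squareBasis {a b c : R} (ha : IsSMulRegular R a)
    (hb : IsSMulRegular R b) (hc : IsSMulRegular R c) :
    LinearIndependent R (squareBasis a b c) := by
  have hglue := linearIndependent_glueFamily (Prod.isSMulRegular_iff.2 ⟨ha, ha⟩)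
    (linearIndependent_edgeBasis hb) (edgeBasis c) (linearIndependent_edgeBasis hc)
  rw [← layers_comp_squareBasis, ← Function.comp_assoc, linearIndependent_equiv] at hglue
  exact hglue.of_comp

theorem isSquareAsgn_iff_mem_span {a b c : R} (hbc : a ∣ b - c) (hsat : ∀ t, c ∣ a * t → c ∣ t)
    {f : Bool × Bool → R} :
    IsSquareAsgn a b c f ↔ f ∈ span R (Set.range (squareBasis a b c)) := by
  have hglue := span_glueFamily (fun _ => mem_edgeAsgn_of_smul_mem hsat) (span_edgeBasis b)
    (fun i => span_edgeBasis c ▸ subset_span ⟨i, rfl⟩) (edgeBasis_congr hbc) (span_edgeBasis c)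
  rw [isSquareAsgn_iff_layers_mem, ← hglue, ← layers_comp_squareBasis, ← Function.comp_assoc,
    EquivLike.range_comp, Set.range_comp, span_image]
  exact layers_injective.mem_set_image

theorem asgn21_free_basis_general {a b c : R} (ha : IsSMulRegular R a) (hb : IsSMulRegular R b)
    (hc : IsSMulRegular R c) (hbc : a ∣ b - c) (hsat : ∀ t, c ∣ a * t → c ∣ t) :
    (∀ k : Fin 4, IsSquareAsgn a b c (squareBasis a b c k)) ∧
    LinearIndependent R (squareBasis a b c) ∧
    (∀ f : Bool × Bool → R, IsSquareAsgn a b c f →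
      ∃ t : Fin 4 → R, f = fun v => ∑ k, t k * squareBasis a b c k v) := by
  refine ⟨fun k => (isSquareAsgn_iff_mem_span hbc hsat).2 (subset_span ⟨k, rfl⟩),
    linearIndependent_squareBasis ha hb hc, fun f hf => ?_⟩
  obtain ⟨t, ht⟩ :=
    (mem_span_range_iff_exists_fun R).1 ((isSquareAsgn_iff_mem_span hbc hsat).1 hf)
  exact ⟨t, by ext v; simp [← ht]⟩

end Square

theorem x₁_not_dvd_x₁_add_x₂ : ¬ x₁ ∣ x₁ + x₂ := by
  simp [x₁, x₂]

theorem isRelPrime_x₁_add_x₂_x₁ : IsRelPrime (x₁ + x₂) x₁ :=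
  (X_prime.irreducible.isRelPrime_iff_not_dvd.2 x₁_not_dvd_x₁_add_x₂).symm

theorem x₁_add_x₂_ne_zero : x₁ + x₂ ≠ 0 :=
  fun h => x₁_not_dvd_x₁_add_x₂ (h ▸ dvd_zero x₁)

/-- The `S`-module `A(Γ_{[2,1]})` of assignments is free with basis `B21`: each `B21 k`
is an assignment, they are `S`-linearly independent, and every assignment is an
`S`-linear combination of them. -/
theorem asgn21_free_basis :
    (∀ k : Fin 4, IsAsgn21 (B21 k)) ∧
    LinearIndependent S2 B21 ∧
    (∀ f : Bool × Bool → S2, IsAsgn21 f →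
      ∃ a : Fin 4 → S2, f = fun v => ∑ k, a k * B21 k v) :=
  asgn21_free_basis_general (.of_ne_zero (X_ne_zero 0)) (.of_ne_zero (X_ne_zero 1))
    (.of_ne_zero x₁_add_x₂_ne_zero) ⟨-1, by ring⟩ fun _ =>
      isRelPrime_x₁_add_x₂_x₁.dvd_of_dvd_mul_left
end

section
/- Let A be the 4×4 matrix over S = ℝ[x_1, x_2] given by A = [[1, 0, 0, 0], [1, x_2, 0, 0], [1, 0, x_1, 0], [1, x_1 + x_2, x_1, x_1(x_1 + x_2)]]. Then the set of column vectors Δ ∈ S^4 such that x_2 divides every entry of the product A·Δ is exactly {x_2·u + t·(0, −x_1, 0, 1) : u ∈ S^4, t ∈ S}. -/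
open MvPolynomial

/-- The matrix `A` recording the basis of assignments for `Γ_{[2,1]}` in type `A_2`. -/
noncomputable def A21 : Matrix (Fin 4) (Fin 4) S2 :=
  !![1, 0, 0, 0;
     1, x₂, 0, 0;
     1, 0, x₁, 0;
     1, x₁ + x₂, x₁, x₁ * (x₁ + x₂)]

/-!
Reading the rows of `A Δ` modulo `x₂` leaves `Δ₀`, `Δ₀ + x₁ Δ₂` and
`Δ₀ + x₁ Δ₂ + x₁ (Δ₁ + x₁ Δ₃)`. As `x₁` can be cancelled modulo `x₂`, the system says that `x₂`
divides `Δ₀`, `Δ₂` and `Δ₁ + x₁ Δ₃`; the last condition makes `Δ₃` a free parameter that determines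
`Δ₁` modulo `x₂`.
-/

section General

variable {R : Type*} [CommRing R]

/-- The matrix of the basis of assignments for `Γ_{[2,1]}`, with arbitrary ring elements `a` and `b`
in place of the variables `x₁` and `x₂`. -/
def assignmentMatrix (a b : R) : Matrix (Fin 4) (Fin 4) R :=
  !![1, 0, 0, 0;
     1, b, 0, 0;
     1, 0, a, 0;
     1, a + b, a, a * (a + b)]

theorem assignmentMatrix_mulVec (a b : R) (v : Fin 4 → R) :
    (assignmentMatrix a b).mulVec v =
      ![v 0, v 0 + b * v 1, v 0 + a * v 2,
        v 0 + (a + b) * v 1 + a * v 2 + a * (a + b) * v 3] := by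
  ext i
  fin_cases i <;> simp [assignmentMatrix, Matrix.mulVec, dotProduct, Fin.sum_univ_four]

theorem forall_dvd_assignmentMatrix_mulVec_iff {a b : R} (hab : ∀ p, b ∣ a * p → b ∣ p)
    (v : Fin 4 → R) :
    (∀ i, b ∣ (assignmentMatrix a b).mulVec v i) ↔ b ∣ v 0 ∧ b ∣ v 1 + a * v 3 ∧ b ∣ v 2 := by
  have row_three : v 0 + (a + b) * v 1 + a * v 2 + a * (a + b) * v 3 =
      v 0 + a * v 2 + a * (v 1 + a * v 3) + b * (v 1 + a * v 3) := by ring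
  have dvd_row_three_iff : b ∣ v 0 + (a + b) * v 1 + a * v 2 + a * (a + b) * v 3 ↔
      b ∣ v 0 + a * v 2 + a * (v 1 + a * v 3) := by
    rw [row_three, dvd_add_left (dvd_mul_right b _)]
  have forall_dvd_iff : (∀ i, b ∣ (assignmentMatrix a b).mulVec v i) ↔
      b ∣ v 0 ∧ b ∣ v 0 + b * v 1 ∧ b ∣ v 0 + a * v 2 ∧
        b ∣ v 0 + (a + b) * v 1 + a * v 2 + a * (a + b) * v 3 := by
    simp [assignmentMatrix_mulVec, Fin.forall_fin_succ]
  rw [forall_dvd_iff]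
  constructor
  · rintro ⟨h₀, -, h₂, h₃⟩
    exact ⟨h₀, hab _ ((dvd_add_right h₂).mp (dvd_row_three_iff.mp h₃)),
      hab _ ((dvd_add_right h₀).mp h₂)⟩
  · rintro ⟨h₀, h₁, h₂⟩
    have h₂' : b ∣ v 0 + a * v 2 := h₀.add (h₂.mul_left a)
    exact ⟨h₀, h₀.add (dvd_mul_right b _), h₂',
      dvd_row_three_iff.mpr (h₂'.add (h₁.mul_left a))⟩

theorem exists_eq_smul_add_smul_iff (a b : R) (v : Fin 4 → R) :
    (∃ (u : Fin 4 → R) (t : R), v = b • u + t • ![0, -a, 0, 1]) ↔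
      b ∣ v 0 ∧ b ∣ v 1 + a * v 3 ∧ b ∣ v 2 := by
  constructor
  · rintro ⟨u, t, rfl⟩
    have combination : b * u 1 + -(t * a) + a * (b * u 3 + t) = b * (u 1 + a * u 3) := by ring
    simp [combination]
  · rintro ⟨⟨u₀, h₀⟩, ⟨u₁, h₁⟩, ⟨u₂, h₂⟩⟩
    refine ⟨![u₀, u₁, u₂, 0], v 3, ?_⟩
    have h₁' : v 1 = b * u₁ - v 3 * a := by linear_combination h₁
    ext i
    fin_cases i <;> simp [h₀, h₁', h₂, sub_eq_add_neg]

theorem congruence_system_solutions_general {a b : R} (hab : ∀ p, b ∣ a * p → b ∣ p) :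
    {v : Fin 4 → R | ∀ i, b ∣ (assignmentMatrix a b).mulVec v i} =
      {v : Fin 4 → R | ∃ (u : Fin 4 → R) (t : R), v = b • u + t • ![0, -a, 0, 1]} :=
  Set.ext fun v =>
    (forall_dvd_assignmentMatrix_mulVec_iff hab v).trans (exists_eq_smul_add_smul_iff a b v).symm

end General

theorem X_dvd_of_dvd_X_mul {σ R : Type*} [CommRing R] [IsDomain R] {i j : σ} (hij : j ≠ i)
    {p : MvPolynomial σ R} (h : X j ∣ X i * p) : (X j : MvPolynomial σ R) ∣ p :=
  (X_dvd_mul_iff.mp h).resolve_left (X_dvd_X.not.mpr hij)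

/-- The set of column vectors `Δ ∈ S⁴` with `A·Δ ≡ 0 (mod x₂)` is exactly
`{x₂·u + t·(0, −x₁, 0, 1) : u ∈ S⁴, t ∈ S}`. -/
theorem congruence_system_solutions :
    {Δ : Fin 4 → S2 | ∀ idx : Fin 4, x₂ ∣ A21.mulVec Δ idx} =
      {Δ : Fin 4 → S2 | ∃ (u : Fin 4 → S2) (t : S2),
        Δ = x₂ • u + t • ![0, -x₁, 0, 1]} :=
  congruence_system_solutions_general fun _ => X_dvd_of_dvd_X_mul one_ne_zero
end

section
/- The set {f(212) : f ∈ A(Γ_{[2,1,2]}) and f(v) = 0 for all vertices v ≠ 212} is exactly the principal ideal of S generated by x_1·x_2·(x_1 + x_2). Equivalently, a polynomial g ∈ S is the value at 212 of an assignment supported at the single vertex 212 if and only if x_1 x_2 (x_1 + x_2) divides g. (This is the generating ideal I_(212) of the flow-up of the top vertex.) -/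
open MvPolynomial

/-- Vertices of the graph `Γ_{[2,1,2]}`: triples `(ε₁, ε₂, ε₃)`, written as subwords
`000 = (0,0,0)`, `200 = (1,0,0)`, `010 = (0,1,0)`, `210 = (1,1,0)`, `002 = (0,0,1)`,
`202 = (1,0,1)`, `012 = (0,1,1)`, `212 = (1,1,1)`. -/
abbrev V3 : Type := Bool × Bool × Bool

/-- Label of an edge of `Γ_{[2,1,2]}` whose endpoints differ at position 1:
`s₂^{ε₃} s₁^{ε₂}(α₂)`, i.e. `x₂`, `x₁ + x₂`, `−x₂`, `x₁` as `(ε₂, ε₃)` runs over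
`(0,0)`, `(1,0)`, `(0,1)`, `(1,1)`. -/
noncomputable def lab1 (e₂ e₃ : Bool) : S2 :=
  if e₃ then (if e₂ then x₁ else -x₂) else (if e₂ then x₁ + x₂ else x₂)

/-- Label of an edge of `Γ_{[2,1,2]}` whose endpoints differ at position 2:
`s₂^{ε₃}(α₁)`, i.e. `x₁` if `ε₃ = 0` and `x₁ + x₂` if `ε₃ = 1`. -/
noncomputable def lab2 (e₃ : Bool) : S2 := if e₃ then x₁ + x₂ else x₁

/-- An assignment for the graph `Γ_{[2,1,2]}` in type `A_2`: a map `f : {0,1}³ → S` such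
that the label of each edge divides the difference of the values of `f` at its two
endpoints (edges whose endpoints differ at position 3 are labeled `α₂ = x₂`). -/
def IsAsgn212 (f : V3 → S2) : Prop :=
  (∀ e₂ e₃ : Bool, lab1 e₂ e₃ ∣ f (false, e₂, e₃) - f (true, e₂, e₃)) ∧
  (∀ e₁ e₃ : Bool, lab2 e₃ ∣ f (e₁, false, e₃) - f (e₁, true, e₃)) ∧
  (∀ e₁ e₂ : Bool, x₂ ∣ f (e₁, e₂, false) - f (e₁, e₂, true))

/-! An assignment supported at `212` is determined by its value `g` there, and the only edges that
constrain `g` are the three ending at `212`, with labels `x₁`, `x₁ + x₂` and `x₂`. These are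
pairwise relatively prime, so all three divide `g` exactly when their product does. -/

theorem exists_and_forall_ne_eq_zero_iff_single {ι : Type*} {M : ι → Type*} [DecidableEq ι]
    [∀ i, Zero (M i)] (P : (∀ i, M i) → Prop) (i : ι) (m : M i) :
    (∃ f, P f ∧ (∀ j, j ≠ i → f j = 0) ∧ m = f i) ↔ P (Pi.single i m) := by
  constructor
  · rintro ⟨f, hf, hzero, rfl⟩
    have hsingle : f = Pi.single i (f i) := Function.eq_update_iff.mpr ⟨rfl, hzero⟩
    exact hsingle ▸ hf
  · exact fun h ↦ ⟨Pi.single i m, h, fun _ hj ↦ Pi.single_eq_of_ne hj m,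
      (Pi.single_eq_same i m).symm⟩

theorem mul_dvd_iff_of_isRelPrime {M : Type*} [CommMonoid M] [DecompositionMonoid M] {a b c : M}
    (hab : IsRelPrime a b) : a * b ∣ c ↔ a ∣ c ∧ b ∣ c :=
  ⟨fun h ↦ ⟨dvd_of_mul_right_dvd h, dvd_of_mul_left_dvd h⟩, fun ⟨ha, hb⟩ ↦ hab.mul_dvd ha hb⟩

theorem isRelPrime_mul_add {R : Type*} [CommRing R] [DecompositionMonoid R] {a b : R}
    (hab : IsRelPrime a b) : IsRelPrime (a * b) (a + b) := by
  have left : IsRelPrime a (a + b) := by simpa using hab.mul_add_left_right 1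
  have right : IsRelPrime b (a + b) := by simpa using hab.symm.add_mul_left_right 1
  exact left.mul_left right

theorem isRelPrime_X_X {σ R : Type*} [CommRing R] [IsDomain R] {i j : σ} (hij : i ≠ j) :
    IsRelPrime (X i : MvPolynomial σ R) (X j) :=
  X_prime.irreducible.isRelPrime_iff_not_dvd.mpr (X_dvd_X.not.mpr hij)

theorem isAsgn212_single_iff (g : S2) :
    IsAsgn212 (Pi.single (true, true, true) g) ↔ x₁ ∣ g ∧ x₁ + x₂ ∣ g ∧ x₂ ∣ g := by
  simp [IsAsgn212, lab1, lab2, Pi.single_apply]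

/-- The set of values at the top vertex `212` of assignments for `Γ_{[2,1,2]}` supported
at the single vertex `212` is exactly the principal ideal generated by
`x₁·x₂·(x₁ + x₂)`; equivalently, `g` is such a value iff `x₁ x₂ (x₁ + x₂) ∣ g`. -/
theorem flowup_ideal_212 :
    {g : S2 | ∃ f : V3 → S2, IsAsgn212 f ∧
        (∀ v : V3, v ≠ (true, true, true) → f v = 0) ∧ g = f (true, true, true)} =
      ↑(Ideal.span {x₁ * x₂ * (x₁ + x₂)}) := by
  have coprime : IsRelPrime x₁ x₂ := isRelPrime_X_X zero_ne_one
  ext g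
  calc
    _ ↔ IsAsgn212 (Pi.single (true, true, true) g) := exists_and_forall_ne_eq_zero_iff_single _ _ _
    _ ↔ x₁ ∣ g ∧ x₁ + x₂ ∣ g ∧ x₂ ∣ g := isAsgn212_single_iff g
    _ ↔ x₁ * x₂ * (x₁ + x₂) ∣ g := by
      rw [mul_dvd_iff_of_isRelPrime (isRelPrime_mul_add coprime),
        mul_dvd_iff_of_isRelPrime coprime, and_assoc, and_comm (a := x₂ ∣ g)]
    _ ↔ g ∈ Ideal.span {x₁ * x₂ * (x₁ + x₂)} := Ideal.mem_span_singleton.symm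
end
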